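/- There exists an absolute constant c > 0 with the following property. Let m, T, N be positive integers, let V_0,…,V_T ∈ U(4m) be fixed unitaries, and let F : U(4)^T → U(4m) be the circuit map F(U_1,…,U_T) = V_T (U_T ⊗ I_m) ⋯ V_1 (U_1 ⊗ I_m) V_0. Fix a reference parameter setting θ⁰ = (U⁰_1,…,U⁰_T) ∈ U(4)^T. Let Z be a measurable space with probability measure μ, ρ : Z → ℂ^{4m×4m} measurable with density-matrix values, C > 0, and O : Z → ℂ^{4m×4m} measurable with Hermitian values satisfying ‖O_z‖ ≤ C. Define ℓ(θ; z) = Re Tr(O_z · F(θ) · ρ(z) · F(θ)*), R(θ) = ∫ ℓ(θ; z) dμ(z), and R̂_S(θ) = (1/N) Σ_{i=1}^N ℓ(θ; z_i) for S ∈ Z^N. Then for every δ ∈ (0,1), with probability at least 1 − δ over S ~ μ^{⊗N}, simultaneously for every θ = (U_1,…,U_T) ∈ U(4)^T, every K ∈ {0,1,…,T}, and every set of K pairwise distinct indices t_1,…,t_K ∈ {1,…,T}: R(θ) − R̂_S(θ) ≤ c · C · ( √(K(1 + log T)/N) + Σ_{t ∉ {t_1,…,t_K}} ‖U_t − U⁰_t‖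 + √(log(2/δ)/N) ). In particular, if an optimization procedure starting from θ⁰ outputs θ*(S) in which only few gates moved substantially, the generalization error of θ*(S) is controlled by the number of substantially changed gates plus the total movement of the remaining gates. -/

import Mathlib

open MeasureTheory Matrix
open scoped Kronecker ComplexOrder

/-- The ℓ²→ℓ² operator norm (spectral norm) of a complex square matrix. -/
noncomputable def opNorm {n : Type*} [Fintype n] [DecidableEq n] (A : Matrix n n ℂ) : ℝ :=
  ‖Matrix.toEuclideanCLM (𝕜 := ℂ) A‖

/-- The variational unitary circuit: `circuit V U L = V L * (U (L-1) ⊗ I) * ⋯ * (U 0 ⊗ I) * V 0`,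
i.e. `L` layers of 2-qubit gates interleaved with fixed global unitaries on `ℂ^{4m}`. -/
noncomputable def circuit {m : ℕ} (V : ℕ → Matrix (Fin 4 × Fin m) (Fin 4 × Fin m) ℂ)
    (U : ℕ → Matrix (Fin 4) (Fin 4) ℂ) : ℕ → Matrix (Fin 4 × Fin m) (Fin 4 × Fin m) ℂ
  | 0 => V 0
  | (t + 1) => V (t + 1) * (U t ⊗ₖ (1 : Matrix (Fin m) (Fin m) ℂ)) * circuit V U t

/-- The loss `ℓ(θ; z) = Re Tr(O_z · F(θ) · ρ(z) · F(θ)*)`. -/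
noncomputable def qloss {m : ℕ} {Z : Type*}
    (V : ℕ → Matrix (Fin 4 × Fin m) (Fin 4 × Fin m) ℂ) (L : ℕ)
    (O ρ : Z → Matrix (Fin 4 × Fin m) (Fin 4 × Fin m) ℂ)
    (U : ℕ → Matrix (Fin 4) (Fin 4) ℂ) (z : Z) : ℝ :=
  ((O z * circuit V U L * ρ z * (circuit V U L)ᴴ).trace).re

section OperatorNorm

open scoped Matrix.Norms.L2Operator MatrixOrder

variable {n : Type*} [Fintype n] [DecidableEq n]

theorem opNorm_eq_norm (A : Matrix n n ℂ) : opNorm A = ‖A‖ := rfl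

theorem norm_le_one_of_mem_unitaryGroup {U : Matrix n n ℂ} (hU : U ∈ Matrix.unitaryGroup n ℂ) :
    ‖U‖ ≤ 1 := by
  rcases subsingleton_or_nontrivial (Matrix n n ℂ) with h | h
  · rw [Subsingleton.elim U 0, norm_zero]
    exact zero_le_one
  · exact (CStarRing.norm_of_mem_unitary hU).le

theorem norm_kronecker_one_le {k : Type*} [Fintype k] [DecidableEq k] (A : Matrix n n ℂ) :
    ‖A ⊗ₖ (1 : Matrix k k ℂ)‖ ≤ ‖A‖ := by
  let φ : Matrix n n ℂ →⋆ₙₐ[ℂ] Matrix (n × k) (n × k) ℂ :=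
    { toFun := fun A => A ⊗ₖ (1 : Matrix k k ℂ)
      map_smul' := fun c A => by simp [smul_kronecker]
      map_zero' := by simp
      map_add' := fun A B => add_kronecker A B 1
      map_mul' := fun A B => by simp [← mul_kronecker_mul]
      map_star' := fun A => by simp [star_eq_conjTranspose, conjTranspose_kronecker] }
  exact NonUnitalStarAlgHom.norm_apply_le φ A

/-- A bilinear form given by a matrix is bounded by the operator norm. -/
theorem norm_star_dotProduct_mulVec_le (A : Matrix n n ℂ) (x : n → ℂ) :
    ‖star x ⬝ᵥ (A *ᵥ x)‖ ≤ ‖A‖ * (star x ⬝ᵥ x).re := by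
  set y : EuclideanSpace ℂ n := WithLp.toLp 2 x
  have h1 : star x ⬝ᵥ (A *ᵥ x) = inner ℂ y (Matrix.toEuclideanCLM (𝕜 := ℂ) A y) := by
    simp [y, EuclideanSpace.inner_eq_star_dotProduct, dotProduct_comm]
  have h2 : (star x ⬝ᵥ x).re = ‖y‖ ^ 2 := by
    rw [← inner_self_eq_norm_sq (𝕜 := ℂ) y, EuclideanSpace.inner_eq_star_dotProduct,
      dotProduct_comm]
    rfl
  rw [h1, h2]
  calc _ ≤ ‖y‖ * ‖Matrix.toEuclideanCLM (𝕜 := ℂ) A y‖ := norm_inner_le_norm _ _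
    _ ≤ ‖y‖ * (‖A‖ * ‖y‖) := by
        gcongr
        exact (Matrix.toEuclideanCLM (𝕜 := ℂ) A).le_opNorm y
    _ = _ := by ring

/-- Trace duality: `|Tr (A ρ)| ≤ ‖A‖` for a density matrix `ρ`. -/
theorem norm_trace_mul_density_le (A ρ : Matrix n n ℂ) (hρ : ρ.PosSemidef) (htr : ρ.trace = 1) :
    ‖(A * ρ).trace‖ ≤ ‖A‖ := by
  obtain ⟨B, rfl⟩ := CStarAlgebra.nonneg_iff_eq_star_mul_self.mp hρ.nonneg
  rw [star_eq_conjTranspose] at htr ⊢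
  have key : ∀ D : Matrix n n ℂ,
      (D * (Bᴴ * B)).trace = ∑ i, star (star (B i)) ⬝ᵥ (D *ᵥ star (B i)) := by
    intro D
    rw [← Matrix.mul_assoc, Matrix.trace_mul_comm]
    simp only [Matrix.trace, Matrix.diag, Matrix.mul_apply, dotProduct, mulVec, star_star,
      conjTranspose_apply, Pi.star_apply]
  have h1 : (1 : ℝ) = ∑ i, (star (star (B i)) ⬝ᵥ star (B i)).re := by
    have := congrArg Complex.re (key 1)
    rw [Matrix.one_mul, htr] at this
    simpa using this
  rw [key]
  calc _ ≤ ∑ i, ‖star (star (B i)) ⬝ᵥ (A *ᵥ star (B i))‖ := norm_sum_le _ _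
    _ ≤ ∑ i, ‖A‖ * (star (star (B i)) ⬝ᵥ star (B i)).re :=
        Finset.sum_le_sum fun i _ => norm_star_dotProduct_mulVec_le A _
    _ = ‖A‖ := by rw [← Finset.mul_sum, ← h1, mul_one]

theorem norm_le_sum_norm_entries (A : Matrix n n ℂ) : ‖A‖ ≤ ∑ i, ∑ j, ‖A i j‖ := by
  have hs : ∀ (i j : n) (c : ℂ), ‖Matrix.single i j c‖ ≤ ‖c‖ := by
    intro i j c
    have h : ‖Matrix.single i j c‖ * ‖Matrix.single i j c‖ = ‖c‖ * ‖c‖ := by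
      rw [← l2_opNorm_conjTranspose_mul_self, conjTranspose_single, single_mul_single_same,
        ← diagonal_single, l2_opNorm_diagonal, Pi.norm_single]
      simp
    nlinarith [norm_nonneg c, norm_nonneg (Matrix.single i j c)]
  conv_lhs => rw [Matrix.matrix_eq_sum_single A]
  refine (norm_sum_le _ _).trans (Finset.sum_le_sum fun i _ => ?_)
  exact (norm_sum_le _ _).trans (Finset.sum_le_sum fun j _ => hs i j _)

/-- Circuits with unitary layers are contractions. -/
theorem norm_circuit_le_one {m : ℕ} {V : ℕ → Matrix (Fin 4 × Fin m) (Fin 4 × Fin m) ℂ}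
    {U : ℕ → Matrix (Fin 4) (Fin 4) ℂ} {L : ℕ}
    (hV : ∀ s ≤ L, V s ∈ Matrix.unitaryGroup (Fin 4 × Fin m) ℂ)
    (hU : ∀ t < L, U t ∈ Matrix.unitaryGroup (Fin 4) ℂ) : ‖circuit V U L‖ ≤ 1 := by
  induction L with
  | zero => exact norm_le_one_of_mem_unitaryGroup (hV 0 le_rfl)
  | succ L ih =>
    have h1 := ih (fun s hs => hV s (by omega)) (fun t ht => hU t (by omega))
    have h2 := norm_le_one_of_mem_unitaryGroup (hV (L + 1) le_rfl)
    have h3 := (norm_kronecker_one_le (k := Fin m) (U L)).trans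
      (norm_le_one_of_mem_unitaryGroup (hU L (by omega)))
    calc ‖circuit V U (L + 1)‖
        ≤ ‖V (L + 1)‖ * ‖U L ⊗ₖ (1 : Matrix (Fin m) (Fin m) ℂ)‖ * ‖circuit V U L‖ :=
          (norm_mul_le _ _).trans (by gcongr; exact norm_mul_le _ _)
      _ ≤ 1 * 1 * 1 := by gcongr
      _ = 1 := by norm_num

theorem norm_circuit_sub_le {m : ℕ} {V : ℕ → Matrix (Fin 4 × Fin m) (Fin 4 × Fin m) ℂ}
    {U W : ℕ → Matrix (Fin 4) (Fin 4) ℂ} {L : ℕ}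
    (hV : ∀ s ≤ L, V s ∈ Matrix.unitaryGroup (Fin 4 × Fin m) ℂ)
    (hU : ∀ t < L, U t ∈ Matrix.unitaryGroup (Fin 4) ℂ)
    (hW : ∀ t < L, W t ∈ Matrix.unitaryGroup (Fin 4) ℂ) :
    ‖circuit V U L - circuit V W L‖ ≤ ∑ t ∈ Finset.range L, ‖U t - W t‖ := by
  induction L with
  | zero => simp [circuit]
  | succ L ih =>
    have h0 := ih (fun s hs => hV s (by omega)) (fun t ht => hU t (by omega))
      (fun t ht => hW t (by omega))
    have h1 := norm_circuit_le_one (U := W) (fun s (hs : s ≤ L) => hV s (by omega))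
      (fun t ht => hW t (by omega))
    have h2 := norm_le_one_of_mem_unitaryGroup (hV (L + 1) le_rfl)
    have h3 := (norm_kronecker_one_le (k := Fin m) (U L)).trans
      (norm_le_one_of_mem_unitaryGroup (hU L (by omega)))
    have h4 : ‖U L ⊗ₖ (1 : Matrix (Fin m) (Fin m) ℂ) - W L ⊗ₖ 1‖ ≤ ‖U L - W L‖ := by
      have : U L ⊗ₖ (1 : Matrix (Fin m) (Fin m) ℂ) - W L ⊗ₖ 1 = (U L - W L) ⊗ₖ 1 := by
        ext p q
        simp [kroneckerMap_apply, sub_mul]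
      rw [this]
      exact norm_kronecker_one_le _
    have e : circuit V U (L + 1) - circuit V W (L + 1) =
        V (L + 1) * ((U L ⊗ₖ (1 : Matrix (Fin m) (Fin m) ℂ)) * (circuit V U L - circuit V W L)
          + (U L ⊗ₖ (1 : Matrix (Fin m) (Fin m) ℂ) - W L ⊗ₖ 1) * circuit V W L) := by
      simp only [circuit]
      noncomm_ring
    rw [e, Finset.sum_range_succ]
    calc _ ≤ ‖V (L + 1)‖ * (‖U L ⊗ₖ (1 : Matrix (Fin m) (Fin m) ℂ)‖
            * ‖circuit V U L - circuit V W L‖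
          + ‖U L ⊗ₖ (1 : Matrix (Fin m) (Fin m) ℂ) - W L ⊗ₖ 1‖ * ‖circuit V W L‖) := by
          refine (norm_mul_le _ _).trans ?_
          gcongr
          exact (norm_add_le _ _).trans (add_le_add (norm_mul_le _ _) (norm_mul_le _ _))
      _ ≤ 1 * (1 * (∑ t ∈ Finset.range L, ‖U t - W t‖) + ‖U L - W L‖ * 1) := by
          gcongr
      _ = _ := by ring

variable {m T : ℕ} {Z : Type*} {V : ℕ → Matrix (Fin 4 × Fin m) (Fin 4 × Fin m) ℂ}
  {ρ O : Z → Matrix (Fin 4 × Fin m) (Fin 4 × Fin m) ℂ} {C : ℝ}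
  {U W : ℕ → Matrix (Fin 4) (Fin 4) ℂ}

theorem qloss_eq_re_trace (z : Z) :
    qloss V T O ρ U z = (((circuit V U T)ᴴ * O z * circuit V U T * ρ z).trace).re := by
  rw [qloss, Matrix.trace_mul_comm]
  simp only [Matrix.mul_assoc]

theorem abs_qloss_le (hV : ∀ s ≤ T, V s ∈ Matrix.unitaryGroup (Fin 4 × Fin m) ℂ)
    (hρ : ∀ z, (ρ z).PosSemidef ∧ (ρ z).trace = 1) (hO : ∀ z, opNorm (O z) ≤ C)
    (hU : ∀ t < T, U t ∈ Matrix.unitaryGroup (Fin 4) ℂ) (z : Z) :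
    |qloss V T O ρ U z| ≤ C := by
  rw [qloss_eq_re_trace]
  have h1 := norm_circuit_le_one hV hU
  have h2 : ‖(circuit V U T)ᴴ‖ ≤ 1 := by rwa [l2_opNorm_conjTranspose]
  have h3 : ‖O z‖ ≤ C := hO z
  have hC : 0 ≤ C := (norm_nonneg _).trans h3
  calc _ ≤ ‖((circuit V U T)ᴴ * O z * circuit V U T * ρ z).trace‖ := Complex.abs_re_le_norm _
    _ ≤ ‖(circuit V U T)ᴴ * O z * circuit V U T‖ :=
        norm_trace_mul_density_le _ _ (hρ z).1 (hρ z).2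
    _ ≤ ‖(circuit V U T)ᴴ‖ * ‖O z‖ * ‖circuit V U T‖ :=
        (norm_mul_le _ _).trans (by gcongr; exact norm_mul_le _ _)
    _ ≤ 1 * C * 1 := by gcongr
    _ = C := by ring

/-- The loss is Lipschitz in the gates for the sum of operator-norm distances. -/
theorem abs_qloss_sub_le (hV : ∀ s ≤ T, V s ∈ Matrix.unitaryGroup (Fin 4 × Fin m) ℂ)
    (hρ : ∀ z, (ρ z).PosSemidef ∧ (ρ z).trace = 1) (hO : ∀ z, opNorm (O z) ≤ C)
    (hU : ∀ t < T, U t ∈ Matrix.unitaryGroup (Fin 4) ℂ)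
    (hW : ∀ t < T, W t ∈ Matrix.unitaryGroup (Fin 4) ℂ) (z : Z) :
    |qloss V T O ρ U z - qloss V T O ρ W z|
      ≤ 2 * C * ∑ t ∈ Finset.range T, opNorm (U t - W t) := by
  simp only [opNorm_eq_norm]
  rw [qloss_eq_re_trace, qloss_eq_re_trace, ← Complex.sub_re, ← Matrix.trace_sub, ← Matrix.sub_mul]
  set F := circuit V U T
  set G := circuit V W T
  have h1 : ‖F‖ ≤ 1 := norm_circuit_le_one hV hU
  have h2 : ‖Gᴴ‖ ≤ 1 := by rw [l2_opNorm_conjTranspose]; exact norm_circuit_le_one hV hW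
  have h3 : ‖O z‖ ≤ C := hO z
  have hC : 0 ≤ C := (norm_nonneg _).trans h3
  have h4 : ‖F - G‖ ≤ ∑ t ∈ Finset.range T, ‖U t - W t‖ := norm_circuit_sub_le hV hU hW
  have h5 : ‖(F - G)ᴴ‖ ≤ ∑ t ∈ Finset.range T, ‖U t - W t‖ := by
    rwa [l2_opNorm_conjTranspose]
  have e : Fᴴ * O z * F - Gᴴ * O z * G = (F - G)ᴴ * O z * F + Gᴴ * O z * (F - G) := by
    rw [conjTranspose_sub]
    noncomm_ring
  calc _ ≤ ‖((Fᴴ * O z * F - Gᴴ * O z * G) * ρ z).trace‖ := Complex.abs_re_le_norm _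
    _ ≤ ‖Fᴴ * O z * F - Gᴴ * O z * G‖ := norm_trace_mul_density_le _ _ (hρ z).1 (hρ z).2
    _ ≤ ‖(F - G)ᴴ‖ * ‖O z‖ * ‖F‖ + ‖Gᴴ‖ * ‖O z‖ * ‖F - G‖ := by
        rw [e]
        refine (norm_add_le _ _).trans (add_le_add ?_ ?_) <;>
          exact (norm_mul_le _ _).trans (by gcongr; exact norm_mul_le _ _)
    _ ≤ (∑ t ∈ Finset.range T, ‖U t - W t‖) * C * 1
          + 1 * C * ∑ t ∈ Finset.range T, ‖U t - W t‖ := by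
        gcongr
    _ = _ := by ring

end OperatorNorm

theorem measurable_qloss {m T : ℕ} {Z : Type*} [MeasurableSpace Z]
    {V : ℕ → Matrix (Fin 4 × Fin m) (Fin 4 × Fin m) ℂ}
    {ρ O : Z → Matrix (Fin 4 × Fin m) (Fin 4 × Fin m) ℂ}
    (hρ : ∀ p q, Measurable fun z => ρ z p q) (hO : ∀ p q, Measurable fun z => O z p q)
    (U : ℕ → Matrix (Fin 4) (Fin 4) ℂ) : Measurable (qloss V T O ρ U) := by
  unfold qloss
  simp only [Matrix.trace, Matrix.diag, Matrix.mul_apply]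
  fun_prop

theorem exists_unitary_net (M : ℕ) (hM : 0 < M) :
    ∃ (p : Matrix (Fin 4) (Fin 4) ℂ → Matrix (Fin 4) (Fin 4) ℂ)
      (G : Finset (Matrix (Fin 4) (Fin 4) ℂ)), G.card ≤ (2 * M + 1) ^ 32 ∧
      ∀ A ∈ Matrix.unitaryGroup (Fin 4) ℂ,
        p A ∈ G ∧ p A ∈ Matrix.unitaryGroup (Fin 4) ℂ ∧ opNorm (p A - A) ≤ 32 / M := by
  classical
  have hM' : (0 : ℝ) < M := by exact_mod_cast hM
  let key : Matrix (Fin 4) (Fin 4) ℂ → (Fin 4 × Fin 4 → ℤ × ℤ) := fun A x =>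
    (⌊(A x.1 x.2).re * M⌋, ⌊(A x.1 x.2).im * M⌋)
  let rep : (Fin 4 × Fin 4 → ℤ × ℤ) → Matrix (Fin 4) (Fin 4) ℂ := fun k =>
    if h : ∃ A ∈ Matrix.unitaryGroup (Fin 4) ℂ, key A = k then h.choose else 0
  have hrep : ∀ A ∈ Matrix.unitaryGroup (Fin 4) ℂ,
      rep (key A) ∈ Matrix.unitaryGroup (Fin 4) ℂ ∧ key (rep (key A)) = key A := by
    intro A hA
    have h : ∃ B ∈ Matrix.unitaryGroup (Fin 4) ℂ, key B = key A := ⟨A, hA, rfl⟩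
    simp only [rep, dif_pos h]
    exact h.choose_spec
  let I : Finset ℤ := Finset.Icc (-(M : ℤ)) M
  have hI : ∀ x : ℝ, |x| ≤ 1 → ⌊x * M⌋ ∈ I := by
    intro x hx
    obtain ⟨h1, h2⟩ := abs_le.mp hx
    rw [Finset.mem_Icc]
    constructor
    · rw [Int.le_floor]
      push_cast
      nlinarith
    · rw [← Int.cast_le (R := ℝ)]
      refine (Int.floor_le _).trans ?_
      push_cast
      nlinarith
  have hfloor : ∀ x y : ℝ, ⌊x * M⌋ = ⌊y * M⌋ → |x - y| ≤ 1 / M := by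
    intro x y h
    have := (Int.abs_sub_lt_one_of_floor_eq_floor h).le
    rw [← sub_mul, abs_mul, abs_of_pos hM'] at this
    rwa [le_div_iff₀ hM']
  refine ⟨fun A => rep (key A), (Fintype.piFinset fun _ => I ×ˢ I).image rep, ?_, ?_⟩
  · refine Finset.card_image_le.trans ?_
    have hc : I.card = 2 * M + 1 := by
      simp only [I, Int.card_Icc]
      omega
    rw [Fintype.card_piFinset]
    simp only [Finset.card_product, hc, Finset.prod_const, Finset.card_univ, Fintype.card_prod,
      Fintype.card_fin]
    rw [← pow_two, ← pow_mul]
  · intro A hA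
    obtain ⟨hU, hk⟩ := hrep A hA
    refine ⟨Finset.mem_image_of_mem _ ?_, hU, ?_⟩
    · rw [Fintype.mem_piFinset]
      intro x
      have hn := entry_norm_bound_of_unitary hA x.1 x.2
      exact Finset.mem_product.mpr ⟨hI _ ((Complex.abs_re_le_norm _).trans hn),
        hI _ ((Complex.abs_im_le_norm _).trans hn)⟩
    · rw [opNorm_eq_norm]
      refine (norm_le_sum_norm_entries _).trans ?_
      have hent : ∀ i j, ‖(rep (key A) - A) i j‖ ≤ 2 / M := by
        intro i j
        have h := congrFun hk (i, j)
        have h1 := hfloor _ _ (congrArg Prod.fst h)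
        have h2 := hfloor _ _ (congrArg Prod.snd h)
        refine (Complex.norm_le_abs_re_add_abs_im _).trans ?_
        calc _ ≤ 1 / (M : ℝ) + 1 / M := add_le_add h1 h2
          _ = 2 / M := by ring
      calc _ ≤ ∑ _i : Fin 4, ∑ _j : Fin 4, 2 / (M : ℝ) :=
            Finset.sum_le_sum fun i _ => Finset.sum_le_sum fun j _ => hent i j
        _ = 32 / M := by
            simp only [Finset.sum_const, Finset.card_univ, Fintype.card_fin, nsmul_eq_mul]
            push_cast
            ring

section GeneralizationGap

open ProbabilityTheory

variable {Z : Type*} [MeasurableSpace Z] {N : ℕ}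

/-- The gap between the mean of `f` and its empirical average over the sample `S`. -/
noncomputable def gap (μ : Measure Z) (S : Fin N → Z) (f : Z → ℝ) : ℝ :=
  (∫ z, f z ∂μ) - (1 / N) * ∑ i, f (S i)

variable {μ : Measure Z}

theorem integrable_of_abs_le {f : Z → ℝ} {b : ℝ} [IsProbabilityMeasure μ] (hf : Measurable f)
    (hb : ∀ z, |f z| ≤ b) : Integrable f μ :=
  Integrable.of_bound hf.aestronglyMeasurable b (Filter.Eventually.of_forall hb)

theorem gap_sub {S : Fin N → Z} {f g : Z → ℝ} (hf : Integrable f μ) (hg : Integrable g μ) :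
    gap μ S (fun z => f z - g z) = gap μ S f - gap μ S g := by
  simp only [gap, integral_sub hf hg, Finset.sum_sub_distrib]
  ring

variable [IsProbabilityMeasure μ]

theorem gap_le_of_abs_le {S : Fin N → Z} {f : Z → ℝ} {b : ℝ} (hN : 0 < N)
    (hb : ∀ z, |f z| ≤ b) : gap μ S f ≤ 2 * b := by
  have hN' : (0 : ℝ) < N := by exact_mod_cast hN
  have h1 : ∫ z, f z ∂μ ≤ b := by
    have := norm_integral_le_of_norm_le_const (μ := μ) (f := f) (Filter.Eventually.of_forall hb)
    simp only [probReal_univ, mul_one] at this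
    exact (le_abs_self _).trans this
  have h2 : ∑ _i : Fin N, (-b) ≤ ∑ i, f (S i) :=
    Finset.sum_le_sum fun i _ => (abs_le.mp (hb (S i))).1
  have h3 : -b ≤ (1 / N) * ∑ i, f (S i) := by
    rw [one_div, ← div_eq_inv_mul, le_div_iff₀ hN']
    simpa [mul_comm] using h2
  unfold gap
  linarith

/-- Hoeffding's inequality for the empirical average of a bounded function. -/
theorem measure_lt_gap_le {f : Z → ℝ} {b s : ℝ} (hN : 0 < N) (hf : Measurable f)
    (hb : ∀ z, |f z| ≤ b) (hs : 0 ≤ s) :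
    (Measure.pi fun _ : Fin N => μ) {S | s < gap μ S f}
      ≤ ENNReal.ofReal (Real.exp (-(N * s ^ 2 / (2 * b ^ 2)))) := by
  have hN' : (0 : ℝ) < N := by exact_mod_cast hN
  have hsub : ∀ i ∈ (Finset.univ : Finset (Fin N)),
      HasSubgaussianMGF (fun S : Fin N → Z => -f (S i) - ∫ z, -f z ∂μ)
        ((‖b - -b‖₊ / 2) ^ 2) (Measure.pi fun _ : Fin N => μ) := by
    intro i _
    have hmp := measurePreserving_eval (fun _ : Fin N => μ) i
    have h : HasSubgaussianMGF (fun z => -f z - ∫ z, -f z ∂μ) ((‖b - -b‖₊ / 2) ^ 2) μ :=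
      hasSubgaussianMGF_of_mem_Icc hf.neg.aemeasurable (Filter.Eventually.of_forall fun z => by
        obtain ⟨h1, h2⟩ := abs_le.mp (hb z)
        exact ⟨by linarith, by linarith⟩)
    rw [← hmp.map_eq] at h
    have h' := h.of_map hmp.measurable.aemeasurable
    rw [hmp.map_eq] at h'
    exact h'
  have hind : iIndepFun (fun (i : Fin N) (S : Fin N → Z) => -f (S i) - ∫ z, -f z ∂μ)
      (Measure.pi fun _ : Fin N => μ) :=
    iIndepFun_pi (X := fun _ z => -f z - ∫ z, -f z ∂μ)
      fun _ => (hf.neg.sub_const _).aemeasurable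
  have key := HasSubgaussianMGF.measure_sum_ge_le_of_iIndepFun hind hsub (ε := N * s)
    (by positivity)
  rw [← ofReal_measureReal]
  refine ENNReal.ofReal_le_ofReal ?_
  refine (measureReal_mono ?_).trans (key.trans (Real.exp_le_exp.mpr (le_of_eq ?_)))
  · intro S hS
    simp only [Set.mem_ofPred_eq, gap] at hS ⊢
    rw [Finset.sum_sub_distrib, integral_neg]
    simp only [Finset.sum_neg_distrib, Finset.sum_const, Finset.card_univ, Fintype.card_fin,
      nsmul_eq_mul]
    have h1 := mul_lt_mul_of_pos_left hS hN'
    have h2 : (N : ℝ) * ((1 / N) * ∑ i, f (S i)) = ∑ i, f (S i) := by field_simp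
    rw [mul_sub, h2] at h1
    linarith
  · have hbb : ((‖b - -b‖₊ / 2) ^ 2 : NNReal) = (b ^ 2 : ℝ) := by
      push_cast
      rw [Real.norm_eq_abs, div_pow, sq_abs]
      ring
    simp only [Finset.sum_const, Finset.card_univ, Fintype.card_fin, nsmul_eq_mul, NNReal.coe_mul,
      NNReal.coe_natCast, hbb]
    rcases eq_or_ne b 0 with rfl | hb0
    · simp
    · field_simp

/-- Union bound over a finite class of bounded functions. -/
theorem measure_exists_lt_gap_le {Φ : Set (Z → ℝ)} {n : ℕ} {b s : ℝ} (hN : 0 < N)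
    (hfin : Φ.Finite) (hcard : Φ.ncard ≤ n) (hΦ : ∀ f ∈ Φ, Measurable f ∧ ∀ z, |f z| ≤ b)
    (hs : 0 ≤ s) :
    (Measure.pi fun _ : Fin N => μ) {S | ∃ f ∈ Φ, s < gap μ S f}
      ≤ ENNReal.ofReal (n * Real.exp (-(N * s ^ 2 / (2 * b ^ 2)))) := by
  have hset : {S : Fin N → Z | ∃ f ∈ Φ, s < gap μ S f}
      = ⋃ f ∈ hfin.toFinset, {S | s < gap μ S f} := by
    ext S
    simp
  rw [hset]
  refine (measure_biUnion_finset_le _ _).trans ?_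
  refine (Finset.sum_le_sum (fun f hf => measure_lt_gap_le hN (hΦ f (hfin.mem_toFinset.mp hf)).1
    (hΦ f (hfin.mem_toFinset.mp hf)).2 hs)).trans ?_
  rw [Finset.sum_const, ← Set.ncard_eq_toFinset_card _ hfin, nsmul_eq_mul,
    ENNReal.ofReal_mul (Nat.cast_nonneg n), ENNReal.ofReal_natCast]
  gcongr

end GeneralizationGap

section Chaining

variable {m T : ℕ} {Z : Type*} {V : ℕ → Matrix (Fin 4 × Fin m) (Fin 4 × Fin m) ℂ}
  {ρ O : Z → Matrix (Fin 4 × Fin m) (Fin 4 × Fin m) ℂ} {C : ℝ}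
  {U₀ U : ℕ → Matrix (Fin 4) (Fin 4) ℂ}
  {p : ℕ → Matrix (Fin 4) (Fin 4) ℂ → Matrix (Fin 4) (Fin 4) ℂ}
  {ts : Finset ℕ}

/-- Replace the gates indexed by `ts` by their images under `q`, all others by the reference. -/
def project (q : Matrix (Fin 4) (Fin 4) ℂ → Matrix (Fin 4) (Fin 4) ℂ)
    (U₀ : ℕ → Matrix (Fin 4) (Fin 4) ℂ) (ts : Finset ℕ) (U : ℕ → Matrix (Fin 4) (Fin 4) ℂ) :
    ℕ → Matrix (Fin 4) (Fin 4) ℂ :=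
  fun t => if t ∈ ts then q (U t) else U₀ t

/-- The links of the chain of losses along successive approximations `p 0, p 1, …`. -/
noncomputable def chainLink (V : ℕ → Matrix (Fin 4 × Fin m) (Fin 4 × Fin m) ℂ) (T : ℕ)
    (O ρ : Z → Matrix (Fin 4 × Fin m) (Fin 4 × Fin m) ℂ)
    (p : ℕ → Matrix (Fin 4) (Fin 4) ℂ → Matrix (Fin 4) (Fin 4) ℂ)
    (U₀ : ℕ → Matrix (Fin 4) (Fin 4) ℂ) (ts : Finset ℕ) (U : ℕ → Matrix (Fin 4) (Fin 4) ℂ) :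
    ℕ → Z → ℝ
  | 0 => qloss V T O ρ (project (p 0) U₀ ts U)
  | (j + 1) => fun z =>
      qloss V T O ρ (project (p (j + 1)) U₀ ts U) z - qloss V T O ρ (project (p j) U₀ ts U) z

theorem project_mem_unitaryGroup {q : Matrix (Fin 4) (Fin 4) ℂ → Matrix (Fin 4) (Fin 4) ℂ}
    (hq : ∀ A ∈ Matrix.unitaryGroup (Fin 4) ℂ, q A ∈ Matrix.unitaryGroup (Fin 4) ℂ)
    (hU₀ : ∀ t < T, U₀ t ∈ Matrix.unitaryGroup (Fin 4) ℂ)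
    (hU : ∀ t < T, U t ∈ Matrix.unitaryGroup (Fin 4) ℂ) :
    ∀ t < T, project q U₀ ts U t ∈ Matrix.unitaryGroup (Fin 4) ℂ := by
  intro t ht
  unfold project
  split_ifs
  · exact hq _ (hU t ht)
  · exact hU₀ t ht

theorem opNorm_sub_le {n : Type*} [Fintype n] [DecidableEq n] (A B D : Matrix n n ℂ) :
    opNorm (A - B) ≤ opNorm (A - D) + opNorm (B - D) := by
  simp only [opNorm, map_sub]
  rw [norm_sub_rev (toEuclideanCLM (𝕜 := ℂ) B)]
  exact norm_sub_le_norm_sub_add_norm_sub _ _ _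

theorem sum_opNorm_project_sub_le
    {q r : Matrix (Fin 4) (Fin 4) ℂ → Matrix (Fin 4) (Fin 4) ℂ} {ε : ℝ} (hT : 0 < T)
    (hε : 0 ≤ ε) (hqr : ∀ A ∈ Matrix.unitaryGroup (Fin 4) ℂ, opNorm (q A - r A) ≤ ε / T)
    (hU : ∀ t < T, U t ∈ Matrix.unitaryGroup (Fin 4) ℂ) :
    ∑ t ∈ Finset.range T, opNorm (project q U₀ ts U t - project r U₀ ts U t) ≤ ε := by
  have hT' : (0 : ℝ) < T := by exact_mod_cast hT
  calc _ ≤ ∑ _t ∈ Finset.range T, ε / T := by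
        refine Finset.sum_le_sum fun t ht => ?_
        unfold project
        split_ifs
        · exact hqr _ (hU t (Finset.mem_range.mp ht))
        · simp only [sub_self, opNorm, map_zero, norm_zero]
          positivity
    _ = ε := by
        rw [Finset.sum_const, Finset.card_range, nsmul_eq_mul]
        field_simp

theorem abs_chainLink_le (hT : 0 < T)
    (hV : ∀ s ≤ T, V s ∈ Matrix.unitaryGroup (Fin 4 × Fin m) ℂ)
    (hρ : ∀ z, (ρ z).PosSemidef ∧ (ρ z).trace = 1) (hC : 0 < C) (hO : ∀ z, opNorm (O z) ≤ C)
    (hp : ∀ j, ∀ A ∈ Matrix.unitaryGroup (Fin 4) ℂ,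
      p j A ∈ Matrix.unitaryGroup (Fin 4) ℂ ∧ opNorm (p j A - A) ≤ 1 / 4 ^ j / T)
    (hU₀ : ∀ t < T, U₀ t ∈ Matrix.unitaryGroup (Fin 4) ℂ)
    (hU : ∀ t < T, U t ∈ Matrix.unitaryGroup (Fin 4) ℂ) (j : ℕ) (z : Z) :
    |chainLink V T O ρ p U₀ ts U j z| ≤ 10 * C / 4 ^ j := by
  have hmem : ∀ j, ∀ t < T, project (p j) U₀ ts U t ∈ Matrix.unitaryGroup (Fin 4) ℂ :=
    fun j => project_mem_unitaryGroup (fun A hA => (hp j A hA).1) hU₀ hU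
  cases j with
  | zero =>
    refine (abs_qloss_le hV hρ hO (hmem 0) z).trans ?_
    simp only [pow_zero, div_one]
    linarith
  | succ j =>
    refine (abs_qloss_sub_le hV hρ hO (hmem (j + 1)) (hmem j) z).trans ?_
    have h := sum_opNorm_project_sub_le (U₀ := U₀) (ts := ts) (q := p (j + 1)) (r := p j)
      (ε := 5 / 4 ^ (j + 1)) hT (by positivity) (fun A hA => by
        refine (opNorm_sub_le _ _ A).trans
          ((add_le_add (hp (j + 1) A hA).2 (hp j A hA).2).trans (le_of_eq ?_))
        field_simp
        ring) hU
    calc _ ≤ 2 * C * (5 / 4 ^ (j + 1)) := by gcongr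
      _ = _ := by ring

theorem finite_and_ncard_le_of_subset_image {α β : Type*} {n : ℕ} (A : Finset α) (F : α → β)
    {Φ : Set β} (h : Φ ⊆ F '' A) (hA : A.card ≤ n) : Φ.Finite ∧ Φ.ncard ≤ n := by
  have hfin : (F '' (A : Set α)).Finite := A.finite_toSet.image F
  refine ⟨hfin.subset h, (Set.ncard_le_ncard h hfin).trans ?_⟩
  refine (Set.ncard_image_le A.finite_toSet).trans ?_
  rwa [Set.ncard_coe_finset]

/-- The number of distinct chain links at a given scale. -/
theorem ncard_chainLink_le {G : ℕ → Finset (Matrix (Fin 4) (Fin 4) ℂ)} {g : ℕ → ℕ}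
    (hts : ts ⊆ Finset.range T) (hg : Monotone g) (hg1 : ∀ j, 1 ≤ g j)
    (hG : ∀ j, (G j).card ≤ g j)
    (hp : ∀ j, ∀ A ∈ Matrix.unitaryGroup (Fin 4) ℂ, p j A ∈ G j) (j : ℕ) :
    {f : Z → ℝ | ∃ U : ℕ → Matrix (Fin 4) (Fin 4) ℂ,
        (∀ t < T, U t ∈ Matrix.unitaryGroup (Fin 4) ℂ) ∧
        f = chainLink V T O ρ p U₀ ts U j}.Finite ∧
      {f : Z → ℝ | ∃ U : ℕ → Matrix (Fin 4) (Fin 4) ℂ,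
        (∀ t < T, U t ∈ Matrix.unitaryGroup (Fin 4) ℂ) ∧
        f = chainLink V T O ρ p U₀ ts U j}.ncard ≤ (g j * g j) ^ ts.card := by
  classical
  let ext : (ts → Matrix (Fin 4) (Fin 4) ℂ) → ℕ → Matrix (Fin 4) (Fin 4) ℂ :=
    fun r t => if h : t ∈ ts then r ⟨t, h⟩ else U₀ t
  have hext : ∀ U j, project (p j) U₀ ts U = ext fun t => p j (U t) := by
    intro U j
    funext t
    simp only [project, ext]
    split_ifs <;> rfl
  have hlt : ∀ t : ts, (t : ℕ) < T := fun t => Finset.mem_range.mp (hts t.2)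
  cases j with
  | zero =>
    refine finite_and_ncard_le_of_subset_image (Fintype.piFinset fun _ : ts => G 0)
      (fun r => qloss V T O ρ (ext r)) ?_ ?_
    · rintro f ⟨U, hU, rfl⟩
      refine ⟨fun t => p 0 (U t), ?_, ?_⟩
      · simp only [Finset.mem_coe, Fintype.mem_piFinset]
        exact fun t => hp 0 _ (hU t (hlt t))
      · simp only [chainLink, hext]
    · rw [Fintype.card_piFinset]
      simp only [Finset.prod_const, Finset.card_univ, Fintype.card_coe]
      exact Nat.pow_le_pow_left ((hG 0).trans (Nat.le_mul_of_pos_left _ (hg1 0))) _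
  | succ j =>
    refine finite_and_ncard_le_of_subset_image
      (Fintype.piFinset fun _ : ts => G (j + 1) ×ˢ G j)
      (fun r z => qloss V T O ρ (ext fun t => (r t).1) z
        - qloss V T O ρ (ext fun t => (r t).2) z) ?_ ?_
    · rintro f ⟨U, hU, rfl⟩
      refine ⟨fun t => (p (j + 1) (U t), p j (U t)), ?_, ?_⟩
      · simp only [Finset.mem_coe, Fintype.mem_piFinset, Finset.mem_product]
        exact fun t => ⟨hp _ _ (hU t (hlt t)), hp _ _ (hU t (hlt t))⟩
      · simp only [chainLink, hext]
    · rw [Fintype.card_piFinset]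
      simp only [Finset.prod_const, Finset.card_univ, Fintype.card_coe, Finset.card_product]
      exact Nat.pow_le_pow_left
        (Nat.mul_le_mul (hG _) ((hG j).trans (hg (Nat.le_succ j)))) _

theorem gap_eq_sum_gap_chainLink {N : ℕ} [MeasurableSpace Z] {μ : Measure Z}
    (hint : ∀ j, Integrable (qloss V T O ρ (project (p j) U₀ ts U)) μ) (S : Fin N → Z) (J : ℕ) :
    gap μ S (qloss V T O ρ (project (p J) U₀ ts U))
      = ∑ j ∈ Finset.range (J + 1), gap μ S (chainLink V T O ρ p U₀ ts U j) := by
  induction J with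
  | zero => simp [chainLink]
  | succ J ih =>
    rw [Finset.sum_range_succ, ← ih, chainLink, gap_sub (hint _) (hint _)]
    ring

end Chaining

/-- The entropy of the net at scale `j` is dominated by the sub-Gaussian exponent. -/
theorem entropy_mul_exp_le {T : ℕ} (hT : 0 < T) {δ : ℝ} (hδ : 0 < δ) (hδ' : δ < 1) (K j : ℕ) :
    ((65 * T * 4 ^ j : ℝ) ^ 64) ^ K
        * Real.exp (-(450 * 4 ^ j * (K * (1 + Real.log T) + Real.log (2 / δ))))
      ≤ δ / 2 * (1 / (2 * T)) ^ K * (1 / 2) ^ (j + 1) := by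
  have hT' : (1 : ℝ) ≤ T := by exact_mod_cast hT
  set l := Real.log T
  set d := Real.log (2 / δ) with hd
  have hl0 : 0 ≤ l := Real.log_nonneg hT'
  have hTe : (T : ℝ) = Real.exp l := (Real.exp_log (by linarith)).symm
  have hδe : δ / 2 = Real.exp (-d) := by
    rw [Real.exp_neg, hd, Real.exp_log (by positivity), inv_div]
  have hd0 : 0 ≤ d := Real.log_nonneg (by rw [le_div_iff₀ hδ]; linarith)
  have he : (2 : ℝ) ≤ Real.exp 1 := by linarith [Real.exp_one_gt_d9]
  have h65 : (65 : ℝ) ≤ Real.exp 5 := by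
    have : Real.exp 5 = Real.exp 1 ^ 5 := by rw [← Real.exp_nat_mul]; norm_num
    rw [this]
    calc (65 : ℝ) ≤ 2.7 ^ 5 := by norm_num
      _ ≤ _ := by gcongr; linarith [Real.exp_one_gt_d9]
  have h4 : (4 : ℝ) ≤ Real.exp 2 := by
    have : Real.exp 2 = Real.exp 1 ^ 2 := by rw [← Real.exp_nat_mul]; norm_num
    rw [this]
    nlinarith
  have hA : (65 * T * 4 ^ j : ℝ) ≤ Real.exp (5 + l + j * 2) := by
    rw [Real.exp_add, Real.exp_add, ← hTe, Real.exp_nat_mul]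
    gcongr
  have hB : Real.exp (-(1 + l)) ≤ 1 / (2 * T) := by
    rw [Real.exp_neg, ← one_div, Real.exp_add, ← hTe]
    gcongr
  have hD : Real.exp (-d) ≤ 1 / 2 := by rw [← hδe]; linarith
  calc _ ≤ (Real.exp (5 + l + j * 2) ^ 64) ^ K
        * Real.exp (-(450 * 4 ^ j * (K * (1 + l) + d))) := by gcongr
    _ = Real.exp (K * (64 * (5 + l + j * 2)) - 450 * 4 ^ j * (K * (1 + l) + d)) := by
        rw [← Real.exp_nat_mul, ← Real.exp_nat_mul, ← Real.exp_add]
        push_cast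
        ring_nf
    _ ≤ Real.exp (-d + K * (-(1 + l)) + ((j + 1 : ℕ) : ℝ) * (-d)) := by
        refine Real.exp_le_exp.mpr ?_
        push_cast
        have hj : (j : ℝ) + 1 ≤ 4 ^ j := by
          have := one_add_mul_le_pow (a := (3 : ℝ)) (by norm_num) j
          norm_num at this
          have hj0 : (0 : ℝ) ≤ j := Nat.cast_nonneg j
          linarith
        have hj0 : (0 : ℝ) ≤ j := Nat.cast_nonneg j
        have hK0 : (0 : ℝ) ≤ K := Nat.cast_nonneg K
        have hX : 0 ≤ (K * (1 + l) + d) := by positivity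
        have h1 := mul_le_mul_of_nonneg_right hj hX
        have h2 : (5 + l + j * 2) ≤ 5 * ((1 + l) * (j + 1)) := by
          nlinarith [mul_nonneg hl0 hj0]
        have h3 := mul_le_mul_of_nonneg_left h2 hK0
        have h4 : (0 : ℝ) ≤ K * (1 + l) * j := by positivity
        have h5 : (0 : ℝ) ≤ K * (1 + l) := by positivity
        have h6 : 0 ≤ j * d := by positivity
        nlinarith
    _ = Real.exp (-d) * Real.exp (-(1 + l)) ^ K * Real.exp (-d) ^ (j + 1) := by
        rw [Real.exp_add, Real.exp_add, Real.exp_nat_mul, Real.exp_nat_mul]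
    _ ≤ _ := by
        rw [hδe]
        gcongr

theorem sum_powerset_inv_pow_card_le_two {T : ℕ} (hT : 0 < T) :
    ∑ ts ∈ (Finset.range T).powerset, (1 / (2 * T) : ℝ) ^ ts.card ≤ 2 := by
  have hT' : (0 : ℝ) < T := by exact_mod_cast hT
  have h := Finset.sum_pow_mul_eq_add_pow (1 / (2 * T) : ℝ) 1 (Finset.range T)
  simp only [one_pow, mul_one, Finset.card_range] at h
  rw [h]
  have h1 : (1 / (2 * T) + 1 : ℝ) ^ T ≤ Real.exp (1 / 2) := by
    calc _ ≤ Real.exp (1 / (2 * T)) ^ T := by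
          gcongr
          exact Real.add_one_le_exp _
      _ = Real.exp (1 / 2) := by
          rw [← Real.exp_nat_mul]
          congr 1
          field_simp
  have h2 : Real.exp (1 / 2) * Real.exp (1 / 2) = Real.exp 1 := by
    rw [← Real.exp_add]
    norm_num
  nlinarith [Real.exp_one_lt_d9, Real.exp_pos (1 / 2)]

theorem exists_net_sequence {T : ℕ} (hT : 0 < T) :
    ∃ (p : ℕ → Matrix (Fin 4) (Fin 4) ℂ → Matrix (Fin 4) (Fin 4) ℂ)
      (G : ℕ → Finset (Matrix (Fin 4) (Fin 4) ℂ)), ∀ j, (G j).card ≤ (65 * T * 4 ^ j) ^ 32 ∧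
      ∀ A ∈ Matrix.unitaryGroup (Fin 4) ℂ, p j A ∈ G j ∧
        p j A ∈ Matrix.unitaryGroup (Fin 4) ℂ ∧ opNorm (p j A - A) ≤ 1 / 4 ^ j / T := by
  choose p G hG using fun j : ℕ => exists_unitary_net (32 * T * 4 ^ j) (by positivity)
  refine ⟨p, G, fun j => ⟨(hG j).1.trans (Nat.pow_le_pow_left ?_ _), fun A hA => ?_⟩⟩
  · have : 0 < T * 4 ^ j := by positivity
    nlinarith
  · obtain ⟨h1, h2, h3⟩ := (hG j).2 A hA
    refine ⟨h1, h2, h3.trans (le_of_eq ?_)⟩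
    have hT' : (T : ℝ) ≠ 0 := by exact_mod_cast hT.ne'
    push_cast
    field_simp

/-- All chain links are simultaneously controlled with high probability. -/
theorem measure_exists_chainLink_gap_le {m T N : ℕ} (hT : 0 < T) (hN : 0 < N)
    {V : ℕ → Matrix (Fin 4 × Fin m) (Fin 4 × Fin m) ℂ}
    (hV : ∀ s ≤ T, V s ∈ Matrix.unitaryGroup (Fin 4 × Fin m) ℂ)
    {U₀ : ℕ → Matrix (Fin 4) (Fin 4) ℂ}
    (hU₀ : ∀ t < T, U₀ t ∈ Matrix.unitaryGroup (Fin 4) ℂ)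
    {Z : Type*} [MeasurableSpace Z] {μ : Measure Z} [IsProbabilityMeasure μ]
    {ρ O : Z → Matrix (Fin 4 × Fin m) (Fin 4 × Fin m) ℂ}
    (hρm : ∀ p q, Measurable fun z => ρ z p q)
    (hρ : ∀ z, (ρ z).PosSemidef ∧ (ρ z).trace = 1) {C : ℝ} (hC : 0 < C)
    (hOm : ∀ p q, Measurable fun z => O z p q) (hO : ∀ z, opNorm (O z) ≤ C)
    {δ : ℝ} (hδ : 0 < δ) (hδ' : δ < 1)
    {p : ℕ → Matrix (Fin 4) (Fin 4) ℂ → Matrix (Fin 4) (Fin 4) ℂ}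
    {G : ℕ → Finset (Matrix (Fin 4) (Fin 4) ℂ)}
    (hp : ∀ j, (G j).card ≤ (65 * T * 4 ^ j) ^ 32 ∧
      ∀ A ∈ Matrix.unitaryGroup (Fin 4) ℂ, p j A ∈ G j ∧
        p j A ∈ Matrix.unitaryGroup (Fin 4) ℂ ∧ opNorm (p j A - A) ≤ 1 / 4 ^ j / T) (J : ℕ) :
    (Measure.pi fun _ : Fin N => μ) {S | ∃ ts ⊆ Finset.range T, ∃ j < J,
        ∃ U : ℕ → Matrix (Fin 4) (Fin 4) ℂ,
          (∀ t < T, U t ∈ Matrix.unitaryGroup (Fin 4) ℂ) ∧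
          300 * C * Real.sqrt ((ts.card * (1 + Real.log T) + Real.log (2 / δ)) / N) * (1 / 2) ^ j
            < gap μ S (chainLink V T O ρ p U₀ ts U j)} ≤ ENNReal.ofReal δ := by
  have hN' : (0 : ℝ) < N := by exact_mod_cast hN
  have hT1 : (1 : ℝ) ≤ T := by exact_mod_cast hT
  have hd : 0 ≤ Real.log (2 / δ) := Real.log_nonneg (by rw [le_div_iff₀ hδ]; linarith)
  have hl : 0 ≤ Real.log T := Real.log_nonneg hT1
  let Φ : Finset ℕ → ℕ → Set (Z → ℝ) := fun ts j =>
    {f | ∃ U : ℕ → Matrix (Fin 4) (Fin 4) ℂ,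
      (∀ t < T, U t ∈ Matrix.unitaryGroup (Fin 4) ℂ) ∧ f = chainLink V T O ρ p U₀ ts U j}
  let s : Finset ℕ → ℕ → ℝ := fun ts j =>
    300 * C * Real.sqrt ((ts.card * (1 + Real.log T) + Real.log (2 / δ)) / N) * (1 / 2) ^ j
  have hmeas : ∀ ts U j, Measurable (chainLink V T O ρ p U₀ ts U j) := by
    intro ts U j
    cases j with
    | zero => exact measurable_qloss hρm hOm _
    | succ j => exact (measurable_qloss hρm hOm _).sub (measurable_qloss hρm hOm _)
  have hlevel : ∀ ts ∈ (Finset.range T).powerset, ∀ j,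
      (Measure.pi fun _ : Fin N => μ) {S | ∃ f ∈ Φ ts j, s ts j < gap μ S f}
        ≤ ENNReal.ofReal (δ / 2 * (1 / (2 * T)) ^ ts.card * (1 / 2) ^ (j + 1)) := by
    intro ts hts j
    obtain ⟨hfin, hcard⟩ := ncard_chainLink_le (V := V) (O := O) (ρ := ρ) (p := p) (U₀ := U₀)
      (g := fun j => (65 * T * 4 ^ j) ^ 32) (Finset.mem_powerset.mp hts)
      (fun a b hab => by dsimp only; gcongr; norm_num)
      (fun j => Nat.one_le_pow _ _ (by positivity))
      (fun j => (hp j).1) (fun j A hA => ((hp j).2 A hA).1) j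
    refine (measure_exists_lt_gap_le (b := 10 * C / 4 ^ j) hN hfin hcard ?_ ?_).trans
      (ENNReal.ofReal_le_ofReal ?_)
    · rintro f ⟨U, hU, rfl⟩
      exact ⟨hmeas ts U j, abs_chainLink_le hT hV hρ hC hO (fun j A hA => ((hp j).2 A hA).2) hU₀
        hU j⟩
    · positivity
    · refine le_trans (le_of_eq ?_) (entropy_mul_exp_le hT hδ hδ' ts.card j)
      have h4 : ((1 : ℝ) / 2) ^ j * (1 / 2) ^ j = 1 / 4 ^ j := by
        rw [← mul_pow, ← _root_.one_div_pow]
        norm_num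
      congr 1
      · push_cast
        ring
      · congr 2
        have hX : 0 ≤ (ts.card * (1 + Real.log T) + Real.log (2 / δ)) / N := by positivity
        have e : s ts j ^ 2 = 90000 * C ^ 2
            * ((ts.card * (1 + Real.log T) + Real.log (2 / δ)) / N) * (1 / 4 ^ j) := by
          simp only [s]
          rw [← h4, mul_pow, mul_pow, Real.sq_sqrt hX]
          ring
        rw [e]
        field_simp
        ring
  have hsub : {S : Fin N → Z | ∃ ts ⊆ Finset.range T, ∃ j < J,
        ∃ U : ℕ → Matrix (Fin 4) (Fin 4) ℂ,
          (∀ t < T, U t ∈ Matrix.unitaryGroup (Fin 4) ℂ) ∧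
          s ts j < gap μ S (chainLink V T O ρ p U₀ ts U j)}
      ⊆ ⋃ ts ∈ (Finset.range T).powerset, ⋃ j ∈ Finset.range J,
        {S | ∃ f ∈ Φ ts j, s ts j < gap μ S f} := by
    rintro S ⟨ts, hts, j, hj, U, hU, h⟩
    simp only [Set.mem_iUnion]
    exact ⟨ts, Finset.mem_powerset.mpr hts, j, Finset.mem_range.mpr hj, _, ⟨U, hU, rfl⟩, h⟩
  refine (measure_mono hsub).trans ((measure_biUnion_finset_le _ _).trans ?_)
  calc _ ≤ ∑ ts ∈ (Finset.range T).powerset, ∑ j ∈ Finset.range J,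
          ENNReal.ofReal (δ / 2 * (1 / (2 * T)) ^ ts.card * (1 / 2) ^ (j + 1)) :=
        Finset.sum_le_sum fun ts hts => (measure_biUnion_finset_le _ _).trans
          (Finset.sum_le_sum fun j _ => hlevel ts hts j)
    _ = ENNReal.ofReal (∑ ts ∈ (Finset.range T).powerset, ∑ j ∈ Finset.range J,
          δ / 2 * (1 / (2 * T)) ^ ts.card * (1 / 2) ^ (j + 1)) := by
        rw [ENNReal.ofReal_sum_of_nonneg fun ts _ => Finset.sum_nonneg fun j _ => by positivity]
        refine Finset.sum_congr rfl fun ts _ => ?_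
        rw [ENNReal.ofReal_sum_of_nonneg fun j _ => by positivity]
    _ ≤ ENNReal.ofReal δ := by
        refine ENNReal.ofReal_le_ofReal ?_
        have h1 : ∑ j ∈ Finset.range J, ((1 : ℝ) / 2) ^ (j + 1) ≤ 1 := by
          simp only [pow_succ, ← Finset.sum_mul]
          linarith [sum_geometric_two_le J]
        simp only [← Finset.mul_sum, ← Finset.sum_mul]
        calc _ ≤ δ / 2 * 2 * 1 := by
              gcongr
              exact sum_powerset_inv_pow_card_le_two hT
          _ = δ := by ring

/-- The deterministic part of the chaining argument. -/
theorem gap_qloss_le_of_chainLink_le {m T N : ℕ} (hT : 0 < T) (hN : 0 < N)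
    {V : ℕ → Matrix (Fin 4 × Fin m) (Fin 4 × Fin m) ℂ}
    (hV : ∀ s ≤ T, V s ∈ Matrix.unitaryGroup (Fin 4 × Fin m) ℂ)
    {U₀ U : ℕ → Matrix (Fin 4) (Fin 4) ℂ}
    (hU₀ : ∀ t < T, U₀ t ∈ Matrix.unitaryGroup (Fin 4) ℂ)
    (hU : ∀ t < T, U t ∈ Matrix.unitaryGroup (Fin 4) ℂ)
    {Z : Type*} [MeasurableSpace Z] {μ : Measure Z} [IsProbabilityMeasure μ]
    {ρ O : Z → Matrix (Fin 4 × Fin m) (Fin 4 × Fin m) ℂ}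
    (hρm : ∀ p q, Measurable fun z => ρ z p q)
    (hρ : ∀ z, (ρ z).PosSemidef ∧ (ρ z).trace = 1) {C : ℝ} (hC : 0 < C)
    (hOm : ∀ p q, Measurable fun z => O z p q) (hO : ∀ z, opNorm (O z) ≤ C)
    {p : ℕ → Matrix (Fin 4) (Fin 4) ℂ → Matrix (Fin 4) (Fin 4) ℂ}
    (hp : ∀ j, ∀ A ∈ Matrix.unitaryGroup (Fin 4) ℂ,
      p j A ∈ Matrix.unitaryGroup (Fin 4) ℂ ∧ opNorm (p j A - A) ≤ 1 / 4 ^ j / T)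
    {ts : Finset ℕ} {r : ℝ} (hr : 0 ≤ r) {S : Fin N → Z} (J : ℕ)
    (hlink : ∀ j < J + 1, gap μ S (chainLink V T O ρ p U₀ ts U j) ≤ r * (1 / 2) ^ j) :
    gap μ S (qloss V T O ρ U) ≤ 2 * r + 4 * C / 4 ^ J
      + 4 * C * ∑ t ∈ Finset.range T \ ts, opNorm (U t - U₀ t) := by
  have hint : ∀ W : ℕ → Matrix (Fin 4) (Fin 4) ℂ,
      (∀ t < T, W t ∈ Matrix.unitaryGroup (Fin 4) ℂ) → Integrable (qloss V T O ρ W) μ :=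
    fun W hW => integrable_of_abs_le (measurable_qloss hρm hOm W) (abs_qloss_le hV hρ hO hW)
  have hmem : ∀ j, ∀ t < T, project (p j) U₀ ts U t ∈ Matrix.unitaryGroup (Fin 4) ℂ :=
    fun j => project_mem_unitaryGroup (fun A hA => (hp j A hA).1) hU₀ hU
  have hid : ∀ t < T, project id U₀ ts U t ∈ Matrix.unitaryGroup (Fin 4) ℂ :=
    project_mem_unitaryGroup (fun A hA => hA) hU₀ hU
  have hlip : ∀ W W' : ℕ → Matrix (Fin 4) (Fin 4) ℂ,
      (∀ t < T, W t ∈ Matrix.unitaryGroup (Fin 4) ℂ) →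
      (∀ t < T, W' t ∈ Matrix.unitaryGroup (Fin 4) ℂ) →
      gap μ S (qloss V T O ρ W) - gap μ S (qloss V T O ρ W')
        ≤ 4 * C * ∑ t ∈ Finset.range T, opNorm (W t - W' t) := by
    intro W W' hW hW'
    rw [← gap_sub (hint W hW) (hint W' hW')]
    refine (gap_le_of_abs_le hN (abs_qloss_sub_le hV hρ hO hW hW')).trans (le_of_eq ?_)
    ring
  have hzero : opNorm (0 : Matrix (Fin 4) (Fin 4) ℂ) = 0 := by simp [opNorm]
  have hsymm : ∀ A B : Matrix (Fin 4) (Fin 4) ℂ, opNorm (A - B) = opNorm (B - A) := by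
    intro A B
    simp only [opNorm, map_sub]
    exact norm_sub_rev _ _
  have hoff : gap μ S (qloss V T O ρ U) - gap μ S (qloss V T O ρ (project id U₀ ts U))
      ≤ 4 * C * ∑ t ∈ Finset.range T \ ts, opNorm (U t - U₀ t) := by
    refine (hlip _ _ hU hid).trans (le_of_eq ?_)
    congr 1
    rw [Finset.sdiff_eq_filter, Finset.sum_filter]
    refine Finset.sum_congr rfl fun t _ => ?_
    by_cases h : t ∈ ts <;> simp [project, h, hzero]
  have htail : gap μ S (qloss V T O ρ (project id U₀ ts U))
      - gap μ S (qloss V T O ρ (project (p J) U₀ ts U)) ≤ 4 * C / 4 ^ J := by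
    refine (hlip _ _ hid (hmem J)).trans ?_
    have h := sum_opNorm_project_sub_le (U₀ := U₀) (ts := ts) (q := id) (r := p J)
      (ε := 1 / 4 ^ J) hT (by positivity)
      (fun A hA => (hsymm _ _).trans_le (hp J A hA).2) hU
    calc _ ≤ 4 * C * (1 / 4 ^ J) := by gcongr
      _ = _ := by ring
  have hchain : gap μ S (qloss V T O ρ (project (p J) U₀ ts U)) ≤ 2 * r := by
    rw [gap_eq_sum_gap_chainLink (fun j => hint _ (hmem j))]
    calc _ ≤ ∑ j ∈ Finset.range (J + 1), r * (1 / 2) ^ j :=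
          Finset.sum_le_sum fun j hj => hlink j (Finset.mem_range.mp hj)
      _ ≤ r * 2 := by
          rw [← Finset.mul_sum]
          gcongr
          exact sum_geometric_two_le _
      _ = 2 * r := mul_comm _ _
  linarith

theorem one_div_four_pow_le_sqrt {N : ℕ} (hN : 0 < N) {d : ℝ} (hd : Real.log 2 ≤ d) :
    1 / 4 ^ N ≤ 2 * Real.sqrt (d / N) := by
  have hN' : (1 : ℝ) ≤ N := by exact_mod_cast hN
  have h4 : (N : ℝ) ≤ 4 ^ N := by
    have := one_add_mul_le_pow (a := (3 : ℝ)) (by norm_num) N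
    norm_num at this
    linarith
  have h2 := Real.log_two_gt_d9
  calc (1 : ℝ) / 4 ^ N ≤ 2 * ((1 / 2) / N) := by
        rw [div_le_iff₀ (by positivity)]
        field_simp
        exact h4
    _ ≤ 2 * Real.sqrt (d / N) := by
        gcongr
        refine Real.le_sqrt_of_sq_le ?_
        rw [div_pow, div_le_div_iff₀ (by positivity) (by positivity)]
        nlinarith [mul_le_mul hN' hN' zero_le_one (by positivity)]

/-- Optimization-dependent generalization bound: for every parameter setting `θ`, every
`K ∈ {0,…,T}` and every set `ts` of `K` pairwise distinct indices, the generalization error is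
bounded by `c·C·(√(K(1+log T)/N) + Σ_{t ∉ ts} ‖U_t − U⁰_t‖ + √(log(2/δ)/N))`. -/
theorem optimization_dependent_qmlm_generalization :
    ∃ c : ℝ, 0 < c ∧
      ∀ (m T N : ℕ), 0 < m → 0 < T → 0 < N →
      ∀ V : ℕ → Matrix (Fin 4 × Fin m) (Fin 4 × Fin m) ℂ,
        (∀ s ≤ T, V s ∈ Matrix.unitaryGroup (Fin 4 × Fin m) ℂ) →
      ∀ U₀ : ℕ → Matrix (Fin 4) (Fin 4) ℂ,
        (∀ t < T, U₀ t ∈ Matrix.unitaryGroup (Fin 4) ℂ) →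
      ∀ (Z : Type) (_ : MeasurableSpace Z) (μ : Measure Z), IsProbabilityMeasure μ →
      ∀ ρ : Z → Matrix (Fin 4 × Fin m) (Fin 4 × Fin m) ℂ,
        (∀ p q, Measurable fun z => ρ z p q) →
        (∀ z, (ρ z).PosSemidef ∧ (ρ z).trace = 1) →
      ∀ C : ℝ, 0 < C →
      ∀ O : Z → Matrix (Fin 4 × Fin m) (Fin 4 × Fin m) ℂ,
        (∀ p q, Measurable fun z => O z p q) →
        (∀ z, (O z).IsHermitian ∧ opNorm (O z) ≤ C) →
      ∀ δ : ℝ, 0 < δ → δ < 1 →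
        ENNReal.ofReal (1 - δ) ≤
          (Measure.pi fun _ : Fin N => μ) {S | ∀ U : ℕ → Matrix (Fin 4) (Fin 4) ℂ,
            (∀ t < T, U t ∈ Matrix.unitaryGroup (Fin 4) ℂ) →
            ∀ ts : Finset ℕ, ts ⊆ Finset.range T →
            (∫ z, qloss V T O ρ U z ∂μ) - (1 / N) * ∑ i, qloss V T O ρ U (S i)
              ≤ c * C * (Real.sqrt (ts.card * (1 + Real.log T) / N)
                  + ∑ t ∈ Finset.range T \ ts, opNorm (U t - U₀ t)
                  + Real.sqrt (Real.log (2 / δ) / N))} := by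
  refine ⟨1000, by norm_num, ?_⟩
  intro m T N _ hT hN V hV U₀ hU₀ Z _ μ _ ρ hρm hρ C hC O hOm hO δ hδ hδ'
  obtain ⟨p, G, hp⟩ := exists_net_sequence hT
  have hOC : ∀ z, opNorm (O z) ≤ C := fun z => (hO z).2
  have hbad := measure_exists_chainLink_gap_le hT hN hV hU₀ (μ := μ) hρm hρ hC hOm hOC hδ hδ' hp
    (N + 1)
  set B := {S : Fin N → Z | ∃ ts ⊆ Finset.range T, ∃ j < N + 1,
        ∃ U : ℕ → Matrix (Fin 4) (Fin 4) ℂ,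
          (∀ t < T, U t ∈ Matrix.unitaryGroup (Fin 4) ℂ) ∧
          300 * C * Real.sqrt ((ts.card * (1 + Real.log T) + Real.log (2 / δ)) / N) * (1 / 2) ^ j
            < gap μ S (chainLink V T O ρ p U₀ ts U j)}
  have hcompl : ENNReal.ofReal (1 - δ) ≤ (Measure.pi fun _ : Fin N => μ) Bᶜ := by
    rw [ENNReal.ofReal_sub _ hδ.le, ENNReal.ofReal_one, tsub_le_iff_right]
    calc (1 : ENNReal) = (Measure.pi fun _ : Fin N => μ) (Bᶜ ∪ B) := by
          rw [Set.compl_union_self, measure_univ]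
      _ ≤ _ := (measure_union_le _ _).trans (by gcongr)
  refine hcompl.trans (measure_mono fun S hS U hU ts hts => ?_)
  have hN' : (0 : ℝ) < N := by exact_mod_cast hN
  have hl : 0 ≤ Real.log T := Real.log_nonneg (by exact_mod_cast hT)
  have hd2 : Real.log 2 ≤ Real.log (2 / δ) := by
    refine Real.log_le_log (by norm_num) ?_
    rw [le_div_iff₀ hδ]
    linarith
  have hd : 0 ≤ Real.log (2 / δ) := (Real.log_nonneg (by norm_num)).trans hd2
  have hgap := gap_qloss_le_of_chainLink_le hT hN hV hU₀ hU (μ := μ) hρm hρ hC hOm hOC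
    (fun j A hA => ((hp j).2 A hA).2) (ts := ts) (S := S)
    (r := 300 * C * Real.sqrt ((ts.card * (1 + Real.log T) + Real.log (2 / δ)) / N))
    (by positivity) N (fun j hj => by
      by_contra! h
      exact hS ⟨ts, hts, j, hj, U, hU, h⟩)
  have hsqrt : Real.sqrt ((ts.card * (1 + Real.log T) + Real.log (2 / δ)) / N)
      ≤ Real.sqrt (ts.card * (1 + Real.log T) / N) + Real.sqrt (Real.log (2 / δ) / N) := by
    rw [add_div]
    refine Real.sqrt_le_iff.mpr ⟨by positivity, ?_⟩
    rw [add_sq, Real.sq_sqrt (by positivity), Real.sq_sqrt (by positivity)]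
    have : 0 ≤ 2 * Real.sqrt (ts.card * (1 + Real.log T) / N)
        * Real.sqrt (Real.log (2 / δ) / N) := by positivity
    linarith
  have htail : 4 * C / 4 ^ N ≤ 8 * C * Real.sqrt (Real.log (2 / δ) / N) := by
    have := mul_le_mul_of_nonneg_left (one_div_four_pow_le_sqrt hN hd2) (by positivity : 0 ≤ 4 * C)
    calc _ = 4 * C * (1 / 4 ^ N) := by ring
      _ ≤ _ := this
      _ = _ := by ring
  have hsum : 0 ≤ ∑ t ∈ Finset.range T \ ts, opNorm (U t - U₀ t) :=
    Finset.sum_nonneg fun t _ => norm_nonneg _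
  refine hgap.trans ?_
  have h1 := mul_le_mul_of_nonneg_left hsqrt hC.le
  have h2 := mul_nonneg hC.le hsum
  have h3 := mul_nonneg hC.le (Real.sqrt_nonneg (ts.card * (1 + Real.log T) / N))
  have h4 := mul_nonneg hC.le (Real.sqrt_nonneg (Real.log (2 / δ) / N))
  nlinarith
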